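/- Let Q ⊂ ℝ^N be a bounded Lebesgue-measurable set, let p₁, …, p_N: Q → ℝ be measurable with 1 < p_i⁻ ≤ p_i(x) ≤ p_i⁺ < ∞ a.e. for each i, and let a = (a_1, …, a_N): Q × ℝ × ℝ^N → ℝ^N satisfy the growth, strict monotonicity and coercivity conditions. Fix k > 0 and let w_m, w: Q → ℝ be measurable with |w_m(x)| ≤ k for a.e. x, w_m → w a.e. in Q, and let v_m, v: Q → ℝ^N be measurable with sup_m ∫_Q Σ_{i=1}^N |v_{m,i}(x)|^{p_i(x)} dx < ∞ and ∫_Q Σ_{i=1}^N |v_i(x)|^{p_i(x)} dx < ∞. If lim_{m→∞} ∫_Q (a(x, w_m(x), v_m(x)) − a(x, w_m(x), v(x))) · (v_m(x) − v(x)) dx = 0, then along a subsequence v_m converges to v strongly in modular sense: for each i = 1, …, N, ∫_Q |v_{m,i}(x) − v_i(x)|^{p_i(x)} dx → 0 as m → ∞. -/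

import Mathlib

open MeasureTheory Filter ENNReal

/-- The conjugate exponent `q' = q / (q - 1)`. -/
noncomputable def conjExp (q : ℝ) : ℝ := q / (q - 1)

/-!
Strict monotonicity makes the integrands `(a(x, w_m, v_m) - a(x, w_m, v)) · (v_m - v)` nonnegative,
so they tend to `0` in `L¹`, hence a.e. along a subsequence. Coercivity, with growth and Young's
inequality absorbing the cross terms, bounds `∑ |v_{m,i}|^{p_i}` by a constant times this integrand
plus a fixed integrable function. At almost every point the vectors `v_m(x)` therefore stay bounded,
and strict monotonicity singles out `v(x)` as their only cluster point. The same bound dominates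
`∑ |v_{m,i} - v_i|^{p_i}`, up to a term vanishing in `L¹`, so that its integrals tend to `0`. As
this applies to a subsequence of any subsequence, the whole sequence converges.
-/

open Topology

section Exponents

variable {ι : Type*} {p q R : ℝ}

lemma holderConjugate_conjExp (hp : 1 < p) : p.HolderConjugate (conjExp p) :=
  .conjExponent hp

lemma conjExp_le_conjExp (hp : 1 < p) (hpq : p ≤ q) : conjExp q ≤ conjExp p := by
  unfold conjExp
  rw [div_le_div_iff₀ (by linarith) (by linarith)]
  linarith

lemma measurable_conjExp : Measurable conjExp := by
  unfold conjExp
  fun_prop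

lemma mul_le_rpow_add_rpow (hpq : p.HolderConjugate q) {x y : ℝ} (hx : 0 ≤ x) (hy : 0 ≤ y) :
    x * y ≤ x ^ p + y ^ q :=
  (Real.young_inequality_of_nonneg hx hy hpq).trans <| add_le_add
    (div_le_self (Real.rpow_nonneg hx p) hpq.lt.le)
    (div_le_self (Real.rpow_nonneg hy q) hpq.symm.lt.le)

lemma exists_mul_le_mul_rpow_add_mul_rpow {ε : ℝ} (hε : 0 < ε) (R : ℝ) :
    ∃ C, 0 ≤ C ∧ ∀ {p q : ℝ}, p.HolderConjugate q → p ≤ R → ∀ {x y : ℝ}, 0 ≤ x → 0 ≤ y →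
      x * y ≤ ε * x ^ q + C * y ^ p := by
  obtain ⟨δ, hδ, hδε, hδ1⟩ : ∃ δ : ℝ, 0 < δ ∧ δ ≤ ε ∧ δ ≤ 1 :=
    ⟨min ε 1, by positivity, min_le_left _ _, min_le_right _ _⟩
  refine ⟨δ⁻¹ ^ R, by positivity, fun {p q} hpq hpR {x y} hx hy => ?_⟩
  have hδq : δ ^ q ≤ ε := by
    refine le_trans ?_ hδε
    simpa using Real.rpow_le_rpow_of_exponent_ge hδ hδ1 hpq.symm.lt.le
  have hδp : δ⁻¹ ^ p ≤ δ⁻¹ ^ R :=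
    Real.rpow_le_rpow_of_exponent_le (one_le_inv₀ hδ |>.2 hδ1) hpR
  calc x * y = (δ * x) * (δ⁻¹ * y) := by field_simp
    _ ≤ (δ * x) ^ q + (δ⁻¹ * y) ^ p :=
        mul_le_rpow_add_rpow hpq.symm (by positivity) (by positivity)
    _ = δ ^ q * x ^ q + δ⁻¹ ^ p * y ^ p := by
        rw [Real.mul_rpow hδ.le hx, Real.mul_rpow (by positivity) hy]
    _ ≤ ε * x ^ q + δ⁻¹ ^ R * y ^ p := by gcongr

lemma add_rpow_le_two_rpow_mul {x y : ℝ} (hx : 0 ≤ x) (hy : 0 ≤ y) (hp : 0 ≤ p) (hpR : p ≤ R) :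
    (x + y) ^ p ≤ 2 ^ R * (x ^ p + y ^ p) := by
  have hmax : max x y ^ p ≤ x ^ p + y ^ p := by
    rcases max_choice x y with h | h <;> rw [h] <;>
      linarith [Real.rpow_nonneg hx p, Real.rpow_nonneg hy p]
  calc (x + y) ^ p ≤ (2 * max x y) ^ p :=
        Real.rpow_le_rpow (add_nonneg hx hy)
          (by linarith [le_max_left x y, le_max_right x y]) hp
    _ = 2 ^ p * max x y ^ p := Real.mul_rpow zero_le_two (le_max_of_le_left hx)
    _ ≤ 2 ^ R * (x ^ p + y ^ p) := by gcongr; norm_num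

/-- A family of exponents `P` that, together with the conjugate family, is bounded by `R`; thus `P`
stays away from both `1` and `∞`. -/
structure IsBoundedExponent (R : ℝ) (P : ι → ℝ) : Prop where
  one_lt (i : ι) : 1 < P i
  le (i : ι) : P i ≤ R
  conjExp_le (i : ι) : conjExp (P i) ≤ R

namespace IsBoundedExponent

lemma holderConjugate {P : ι → ℝ} (hP : IsBoundedExponent R P) (i : ι) :
    (P i).HolderConjugate ((conjExp ∘ P) i) :=
  holderConjugate_conjExp (hP.one_lt i)

end IsBoundedExponent

lemma exists_isBoundedExponent [Finite ι] {pm : ι → ℝ} (hpm : ∀ i, 1 < pm i) (pM : ι → ℝ) :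
    ∃ R, ∀ {P : ι → ℝ}, (∀ i, pm i ≤ P i ∧ P i ≤ pM i) → IsBoundedExponent R P := by
  obtain ⟨R, hR⟩ := Finite.bddAbove_range pM
  obtain ⟨R', hR'⟩ := Finite.bddAbove_range fun i => conjExp (pm i)
  refine ⟨max R R', fun {P} hP => ⟨fun i => (hpm i).trans_le (hP i).1, fun i => ?_, fun i => ?_⟩⟩
  · exact le_max_of_le_left ((hP i).2.trans (hR (Set.mem_range_self i)))
  · exact le_max_of_le_right <|
      (conjExp_le_conjExp (hpm i) (hP i).1).trans (hR' (Set.mem_range_self i))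

end Exponents

section Modular

variable {ι : Type*} [Fintype ι]

/-- The anisotropic modular `∑ i, |ξ i| ^ P i` of a vector, for a family of exponents `P`. It is the
density of the modular of the anisotropic variable-exponent Lebesgue space. -/
noncomputable def modular (P ξ : ι → ℝ) : ℝ := ∑ i, |ξ i| ^ P i

variable {P Q η : ι → ℝ} {R : ℝ}

lemma modular_nonneg (P ξ : ι → ℝ) : 0 ≤ modular P ξ := by
  unfold modular
  positivity

lemma abs_rpow_le_modular (P ξ : ι → ℝ) (i : ι) : |ξ i| ^ P i ≤ modular P ξ :=
  Finset.single_le_sum (f := fun j => |ξ j| ^ P j) (fun _ _ => by positivity) (Finset.mem_univ i)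

lemma norm_le_one_add_modular (hP : ∀ i, 1 ≤ P i) (ξ : ι → ℝ) : ‖ξ‖ ≤ 1 + modular P ξ := by
  have hmod := modular_nonneg P ξ
  refine (pi_norm_le_iff_of_nonneg (by positivity)).2 fun i => ?_
  rw [Real.norm_eq_abs]
  rcases le_total |ξ i| 1 with h | h
  · linarith
  · linarith [Real.self_le_rpow_of_one_le h (hP i), abs_rpow_le_modular P ξ i]

lemma modular_sub_le (hP : ∀ i, 0 ≤ P i) (hPR : ∀ i, P i ≤ R) (ξ η : ι → ℝ) :
    modular P (ξ - η) ≤ 2 ^ R * (modular P ξ + modular P η) := by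
  unfold modular
  rw [← Finset.sum_add_distrib, Finset.mul_sum]
  refine Finset.sum_le_sum fun i _ => ?_
  calc |ξ i - η i| ^ P i ≤ (|ξ i| + |η i|) ^ P i :=
        Real.rpow_le_rpow (abs_nonneg _) (abs_sub _ _) (hP i)
    _ ≤ 2 ^ R * (|ξ i| ^ P i + |η i| ^ P i) :=
        add_rpow_le_two_rpow_mul (abs_nonneg _) (abs_nonneg _) (hP i) (hPR i)

lemma tendsto_modular_sub_zero_of_tendsto {κ : Type*} {l : Filter κ} {ξ : κ → ι → ℝ}
    (hP : ∀ i, 0 < P i) (h : Tendsto ξ l (𝓝 η)) :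
    Tendsto (fun m => modular P (ξ m - η)) l (𝓝 0) := by
  have hterm (i : ι) : Tendsto (fun m => |ξ m i - η i| ^ P i) l (𝓝 0) := by
    have habs : Tendsto (fun m => |ξ m i - η i|) l (𝓝 0) := by
      simpa using ((tendsto_pi_nhds.1 h i).sub_const (η i)).abs
    simpa [(hP i).ne'] using habs.rpow_const (p := P i) (Or.inr (hP i).le)
  simpa [modular] using tendsto_finsetSum Finset.univ fun i _ => hterm i

lemma exists_abs_dotProduct_le {ε : ℝ} (hε : 0 < ε) (R : ℝ) :
    ∃ C, 0 ≤ C ∧ ∀ {P Q : ι → ℝ}, (∀ i, (P i).HolderConjugate (Q i)) → (∀ i, P i ≤ R) →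
      ∀ b θ : ι → ℝ, |b ⬝ᵥ θ| ≤ ε * modular Q b + C * modular P θ := by
  obtain ⟨C, hC, hyoung⟩ := exists_mul_le_mul_rpow_add_mul_rpow hε R
  refine ⟨C, hC, fun {P Q} hPQ hPR b θ => ?_⟩
  calc |b ⬝ᵥ θ| ≤ ∑ i, |b i| * |θ i| := by
        simpa only [abs_mul, dotProduct] using
          Finset.abs_sum_le_sum_abs (fun i => b i * θ i) Finset.univ
    _ ≤ ∑ i, (ε * |b i| ^ Q i + C * |θ i| ^ P i) :=
        Finset.sum_le_sum fun i _ => hyoung (hPQ i) (hPR i) (abs_nonneg _) (abs_nonneg _)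
    _ = ε * modular Q b + C * modular P θ := by
        simp only [modular, Finset.sum_add_distrib, Finset.mul_sum]

lemma modular_le_of_abs_le_mul_rpow_add {M X : ℝ} {b c : ι → ℝ} (hM : 0 ≤ M) (hX : 0 ≤ X)
    (hc : ∀ i, 0 ≤ c i) (hQ : ∀ i, 0 < Q i) (hQR : ∀ i, Q i ≤ R)
    (hb : ∀ i, |b i| ≤ M * (X ^ (1 / Q i) + c i)) :
    modular Q b ≤ (1 + M) ^ R * 2 ^ R * (Fintype.card ι * X + modular Q c) := by
  have hterm (i : ι) : |b i| ^ Q i ≤ (1 + M) ^ R * 2 ^ R * (X + |c i| ^ Q i) := by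
    have hci := hc i
    calc |b i| ^ Q i ≤ ((1 + M) * (X ^ (1 / Q i) + c i)) ^ Q i :=
          Real.rpow_le_rpow (abs_nonneg _) ((hb i).trans (by gcongr; linarith)) (hQ i).le
      _ = (1 + M) ^ Q i * (X ^ (1 / Q i) + c i) ^ Q i :=
          Real.mul_rpow (by positivity) (by positivity)
      _ ≤ (1 + M) ^ R * (2 ^ R * ((X ^ (1 / Q i)) ^ Q i + c i ^ Q i)) := by
          gcongr
          · linarith
          · exact hQR i
          · exact add_rpow_le_two_rpow_mul (by positivity) hci (hQ i).le (hQR i)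
      _ = (1 + M) ^ R * 2 ^ R * (X + |c i| ^ Q i) := by
          rw [one_div, Real.rpow_inv_rpow hX (hQ i).ne', abs_of_nonneg hci, mul_assoc]
  calc modular Q b ≤ ∑ i, (1 + M) ^ R * 2 ^ R * (X + |c i| ^ Q i) :=
        Finset.sum_le_sum fun i _ => hterm i
    _ = (1 + M) ^ R * 2 ^ R * (Fintype.card ι * X + modular Q c) := by
        simp only [← Finset.mul_sum, Finset.sum_add_distrib, Finset.sum_const, Finset.card_univ,
          nsmul_eq_mul, modular]

lemma sub_dotProduct_sub_eq (b b' ξ η : ι → ℝ) :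
    (b - b') ⬝ᵥ (ξ - η) = b ⬝ᵥ ξ + b' ⬝ᵥ η - (b ⬝ᵥ η + ξ ⬝ᵥ b') := by
  rw [sub_dotProduct, dotProduct_sub, dotProduct_sub, dotProduct_comm ξ b']
  ring

lemma exists_modular_le_mul_sub_dotProduct_sub {α : ℝ} (hα : 0 < α) {K : ℝ} (hK : 0 ≤ K) (R : ℝ) :
    ∃ C, 0 ≤ C ∧ ∀ {P : ι → ℝ}, IsBoundedExponent R P → ∀ {b b' ξ η : ι → ℝ} {Z : ℝ}, 0 ≤ Z →
      modular (conjExp ∘ P) b ≤ K * (modular P ξ + Z) →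
      modular (conjExp ∘ P) b' ≤ K * (modular P η + Z) →
      α * modular P ξ ≤ b ⬝ᵥ ξ → 0 ≤ b' ⬝ᵥ η → 0 ≤ (b - b') ⬝ᵥ (ξ - η) →
      modular P ξ ≤ C * ((b - b') ⬝ᵥ (ξ - η) + (modular P η + Z)) := by
  obtain ⟨ε, hε, hεα⟩ : ∃ ε : ℝ, 0 < ε ∧ ε * (K + 1) = α / 2 :=
    ⟨α / 2 / (K + 1), by positivity, by field_simp⟩
  obtain ⟨C, hC, hyoung⟩ := exists_abs_dotProduct_le (ι := ι) hε R
  refine ⟨2 / α * (1 + (ε * K + C + C * K)), by positivity, ?_⟩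
  intro P hP b b' ξ η Z hZ hb hb' hξ hη hgap
  have hY := modular_nonneg P η
  have hbη : b ⬝ᵥ η ≤ ε * (K * (modular P ξ + Z)) + C * modular P η :=
    (le_abs_self _).trans <| (hyoung hP.holderConjugate hP.le b η).trans (by gcongr)
  have hξb' : ξ ⬝ᵥ b' ≤ ε * modular P ξ + C * (K * (modular P η + Z)) :=
    (le_abs_self _).trans <|
      (hyoung (fun i => (hP.holderConjugate i).symm) hP.conjExp_le ξ b').trans (by gcongr)
  have habsorb : α / 2 * modular P ξ ≤
      (b - b') ⬝ᵥ (ξ - η) + (ε * K + C + C * K) * (modular P η + Z) := by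
    rw [sub_dotProduct_sub_eq]
    have hεX : ε * (K + 1) * modular P ξ = α / 2 * modular P ξ := by rw [hεα]
    have : 0 ≤ ε * K * modular P η + C * Z := by positivity
    linarith
  calc modular P ξ = 2 / α * (α / 2 * modular P ξ) := by field_simp
    _ ≤ 2 / α * ((1 + (ε * K + C + C * K)) * ((b - b') ⬝ᵥ (ξ - η) + (modular P η + Z))) := by
        refine mul_le_mul_of_nonneg_left (habsorb.trans ?_) (by positivity)
        have : 0 ≤ (ε * K + C + C * K) * ((b - b') ⬝ᵥ (ξ - η)) := by positivity
        linarith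
    _ = _ := by ring

lemma exists_abs_sub_dotProduct_sub_le {K : ℝ} (hK : 0 ≤ K) (R : ℝ) :
    ∃ C, ∀ {P : ι → ℝ}, IsBoundedExponent R P → ∀ {b b' ξ η : ι → ℝ} {Z : ℝ}, 0 ≤ Z →
      modular (conjExp ∘ P) b ≤ K * (modular P ξ + Z) →
      modular (conjExp ∘ P) b' ≤ K * (modular P η + Z) →
      |(b - b') ⬝ᵥ (ξ - η)| ≤ C * (modular P ξ + (modular P η + Z)) := by
  obtain ⟨C, hC, hyoung⟩ := exists_abs_dotProduct_le (ι := ι) one_pos R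
  refine ⟨2 ^ R * (2 * K + C), ?_⟩
  intro P hP b b' ξ η Z hZ hb hb'
  have hX := modular_nonneg P ξ
  have hY := modular_nonneg P η
  calc |(b - b') ⬝ᵥ (ξ - η)| ≤ modular (conjExp ∘ P) (b - b') + C * modular P (ξ - η) := by
        simpa only [one_mul] using hyoung hP.holderConjugate hP.le (b - b') (ξ - η)
    _ ≤ 2 ^ R * (K * (modular P ξ + Z) + K * (modular P η + Z)) +
        C * (2 ^ R * (modular P ξ + modular P η)) := by
        have hb_sub :=
          modular_sub_le (fun i => (hP.holderConjugate i).symm.nonneg) hP.conjExp_le b b'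
        have hξ_sub := modular_sub_le (fun i => (hP.holderConjugate i).nonneg) hP.le ξ η
        gcongr
        refine hb_sub.trans ?_
        gcongr
    _ ≤ 2 ^ R * (2 * K + C) * (modular P ξ + (modular P η + Z)) := by
        have : 0 ≤ (2 : ℝ) ^ R * (K * (modular P ξ + modular P η) + C * Z) := by positivity
        linarith

end Modular

section LerayLions

lemma tendsto_of_tendsto_of_mem_isCompact {S E T κ : Type*} [TopologicalSpace S]
    [TopologicalSpace E] [TopologicalSpace T] [T2Space T] {l : Filter κ} {G : S × E → T}
    (hG : Continuous G) {s : κ → S} {s₀ : S} (hs : Tendsto s l (𝓝 s₀)) {ξ : κ → E} {t : T}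
    (hGt : Tendsto (fun m => G (s m, ξ m)) l (𝓝 t)) {K : Set E} (hK : IsCompact K)
    (hξ : ∀ᶠ m in l, ξ m ∈ K) {η : E} (hη : ∀ ζ ∈ K, G (s₀, ζ) = t → ζ = η) :
    Tendsto ξ l (𝓝 η) := by
  refine hK.tendsto_nhds_of_unique_mapClusterPt hξ fun ζ hζ hclust => hη ζ hζ ?_
  obtain ⟨U, hU, hUζ⟩ := mapClusterPt_iff_ultrafilter.1 hclust
  have hlim : Tendsto (fun m => G (s m, ξ m)) U (𝓝 (G (s₀, ζ))) :=
    (hG.tendsto (s₀, ζ)).comp ((hs.mono_left hU).prodMk_nhds hUζ)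
  exact tendsto_nhds_unique hlim (hGt.mono_left hU)

variable {ι : Type*} [Fintype ι]

/-- The Leray–Lions structure conditions at a fixed point `x`: here `g = a(x, ·, ·)`, with exponents
`P i = p_i(x)` and growth data `c i = c_i(x)`. -/
structure IsLerayLionsAt (P c : ι → ℝ) (ahat : ι → ℝ → ℝ) (α : ℝ)
    (g : ℝ → (ι → ℝ) → ι → ℝ) : Prop where
  continuous : Continuous fun sξ : ℝ × (ι → ℝ) => g sξ.1 sξ.2
  c_nonneg (i : ι) : 0 ≤ c i
  growth (s : ℝ) (ξ : ι → ℝ) (i : ι) :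
    |g s ξ i| ≤ ahat i |s| * (modular P ξ ^ (1 / conjExp (P i)) + c i)
  strictMono (s : ℝ) (ξ ξ' : ι → ℝ) : ξ ≠ ξ' → 0 < (g s ξ - g s ξ') ⬝ᵥ (ξ - ξ')
  coercive (s : ℝ) (ξ : ι → ℝ) : α * modular P ξ ≤ g s ξ ⬝ᵥ ξ

/-- The integrand `(g(ξ) - g(η)) · (ξ - η)` measuring the monotonicity of a vector field `g`. -/
def monotonicityGap (g : (ι → ℝ) → ι → ℝ) (ξ η : ι → ℝ) : ℝ := (g ξ - g η) ⬝ᵥ (ξ - η)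

namespace IsLerayLionsAt

variable {P c : ι → ℝ} {ahat : ι → ℝ → ℝ} {α : ℝ} {g : ℝ → (ι → ℝ) → ι → ℝ}

lemma monotonicityGap_nonneg (h : IsLerayLionsAt P c ahat α g) (s : ℝ) (ξ η : ι → ℝ) :
    0 ≤ monotonicityGap (g s) ξ η := by
  by_cases hξη : ξ = η
  · simp [monotonicityGap, hξη]
  · exact (h.strictMono s ξ η hξη).le

lemma exists_modular_conjExp_le (hahat : ∀ i, MonotoneOn (ahat i) (Set.Ici 0)) (k R : ℝ) :
    ∃ K, 0 ≤ K ∧ ∀ {P c : ι → ℝ} {α : ℝ} {g : ℝ → (ι → ℝ) → ι → ℝ}, IsBoundedExponent R P →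
      IsLerayLionsAt P c ahat α g → ∀ {s : ℝ}, |s| ≤ k → ∀ ξ,
      modular (conjExp ∘ P) (g s ξ) ≤ K * (modular P ξ + modular (conjExp ∘ P) c) := by
  set M := ∑ i, |ahat i k|
  have hM : 0 ≤ M := by positivity
  refine ⟨(1 + M) ^ R * 2 ^ R * (Fintype.card ι + 1), by positivity, ?_⟩
  intro P c α g hP h s hs ξ
  have hX := modular_nonneg P ξ
  have hZ := modular_nonneg (conjExp ∘ P) c
  have hahat_le (i : ι) : ahat i |s| ≤ M :=
    calc ahat i |s| ≤ ahat i k := hahat i (abs_nonneg s) ((abs_nonneg s).trans hs) hs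
      _ ≤ |ahat i k| := le_abs_self _
      _ ≤ M := Finset.single_le_sum (f := fun j => |ahat j k|) (fun _ _ => abs_nonneg _)
          (Finset.mem_univ i)
  have hgrowth (i : ι) : |g s ξ i| ≤ M * (modular P ξ ^ (1 / (conjExp ∘ P) i) + c i) := by
    have hci := h.c_nonneg i
    exact (h.growth s ξ i).trans (mul_le_mul_of_nonneg_right (hahat_le i) (by positivity))
  calc modular (conjExp ∘ P) (g s ξ)
      ≤ (1 + M) ^ R * 2 ^ R * (Fintype.card ι * modular P ξ + modular (conjExp ∘ P) c) :=
        modular_le_of_abs_le_mul_rpow_add hM hX h.c_nonneg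
          (fun i => (hP.holderConjugate i).symm.pos) hP.conjExp_le hgrowth
    _ ≤ (1 + M) ^ R * 2 ^ R * ((Fintype.card ι + 1) * (modular P ξ + modular (conjExp ∘ P) c)) := by
        gcongr
        have : 0 ≤ (Fintype.card ι : ℝ) * modular (conjExp ∘ P) c := by positivity
        linarith
    _ = _ := by ring

lemma exists_monotonicityGap_le (hahat : ∀ i, MonotoneOn (ahat i) (Set.Ici 0)) (k R : ℝ) :
    ∃ C, ∀ {P c : ι → ℝ} {α : ℝ} {g : ℝ → (ι → ℝ) → ι → ℝ}, IsBoundedExponent R P →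
      IsLerayLionsAt P c ahat α g → ∀ {s : ℝ}, |s| ≤ k → ∀ ξ η,
      monotonicityGap (g s) ξ η ≤
        C * (modular P ξ + (modular P η + modular (conjExp ∘ P) c)) := by
  obtain ⟨K, hK, hconj⟩ := exists_modular_conjExp_le hahat k R
  obtain ⟨C, hle⟩ := exists_abs_sub_dotProduct_sub_le (ι := ι) hK R
  exact ⟨C, fun hP h _ hs ξ η => (le_abs_self _).trans <|
    hle hP (modular_nonneg _ _) (hconj hP h hs ξ) (hconj hP h hs η)⟩

lemma exists_modular_sub_le (hahat : ∀ i, MonotoneOn (ahat i) (Set.Ici 0)) (hα : 0 < α)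
    (k R : ℝ) :
    ∃ C, 0 ≤ C ∧ ∀ {P c : ι → ℝ} {g : ℝ → (ι → ℝ) → ι → ℝ}, IsBoundedExponent R P →
      IsLerayLionsAt P c ahat α g → ∀ {s : ℝ}, |s| ≤ k → ∀ ξ η,
      modular P (ξ - η) ≤
        C * (monotonicityGap (g s) ξ η + (modular P η + modular (conjExp ∘ P) c)) := by
  obtain ⟨K, hK, hconj⟩ := exists_modular_conjExp_le hahat k R
  obtain ⟨C, hC, hle⟩ := exists_modular_le_mul_sub_dotProduct_sub (ι := ι) hα hK R
  refine ⟨2 ^ R * (C + 1), by positivity, ?_⟩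
  intro P c g hP h s hs ξ η
  have hY := modular_nonneg P η
  have hZ := modular_nonneg (conjExp ∘ P) c
  have hgap := h.monotonicityGap_nonneg s ξ η
  have hX : modular P ξ ≤
      C * (monotonicityGap (g s) ξ η + (modular P η + modular (conjExp ∘ P) c)) :=
    hle hP hZ (hconj hP h hs ξ) (hconj hP h hs η) (h.coercive s ξ)
      ((mul_nonneg hα.le hY).trans (h.coercive s η)) hgap
  calc modular P (ξ - η) ≤ 2 ^ R * (modular P ξ + modular P η) :=
        modular_sub_le (fun i => (hP.holderConjugate i).nonneg) hP.le ξ η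
    _ ≤ 2 ^ R *
        ((C + 1) * (monotonicityGap (g s) ξ η + (modular P η + modular (conjExp ∘ P) c))) := by
        gcongr
        linarith
    _ = _ := by ring

lemma tendsto_of_tendsto_monotonicityGap (h : IsLerayLionsAt P c ahat α g) {κ : Type*}
    {l : Filter κ} {s : κ → ℝ} {s₀ : ℝ} (hs : Tendsto s l (𝓝 s₀)) {ξ : κ → ι → ℝ} {η : ι → ℝ}
    (hgap : Tendsto (fun m => monotonicityGap (g (s m)) (ξ m) η) l (𝓝 0)) {r : ℝ}
    (hξ : ∀ᶠ m in l, ‖ξ m - η‖ ≤ r) : Tendsto ξ l (𝓝 η) := by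
  have hcont : Continuous fun sζ : ℝ × (ι → ℝ) => monotonicityGap (g sζ.1) sζ.2 η := by
    have hη : Continuous fun sζ : ℝ × (ι → ℝ) => g sζ.1 η :=
      h.continuous.comp (continuous_fst.prodMk continuous_const)
    exact (h.continuous.sub hη).dotProduct (continuous_snd.sub continuous_const)
  refine tendsto_of_tendsto_of_mem_isCompact hcont hs hgap (isCompact_closedBall η r)
    (hξ.mono fun m hm => mem_closedBall_iff_norm.2 hm) fun ζ _ hζ => ?_
  by_contra hne
  exact (h.strictMono s₀ ζ η hne).ne' hζ

lemma tendsto_modular_sub_zero (h : IsLerayLionsAt P c ahat α g) (hP : ∀ i, 1 < P i)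
    {κ : Type*} {l : Filter κ} {s : κ → ℝ} {s₀ : ℝ} (hs : Tendsto s l (𝓝 s₀)) {ξ : κ → ι → ℝ}
    {η : ι → ℝ} (hgap : Tendsto (fun m => monotonicityGap (g (s m)) (ξ m) η) l (𝓝 0)) {C r : ℝ}
    (hle : ∀ m, modular P (ξ m - η) ≤ C * (monotonicityGap (g (s m)) (ξ m) η + r)) :
    Tendsto (fun m => modular P (ξ m - η)) l (𝓝 0) := by
  have hbound : ∀ᶠ m in l, C * (monotonicityGap (g (s m)) (ξ m) η + r) ≤ C * (0 + r) + 1 :=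
    ((hgap.add_const r).const_mul C).eventually_le_const (lt_add_one _)
  refine tendsto_modular_sub_zero_of_tendsto (fun i => one_pos.trans (hP i)) <|
    h.tendsto_of_tendsto_monotonicityGap hs hgap (r := 1 + (C * (0 + r) + 1)) ?_
  filter_upwards [hbound] with m hm
  linarith [norm_le_one_add_modular (fun i => (hP i).le) (ξ m - η), hle m]

end IsLerayLionsAt

end LerayLions

section Measure

variable {X : Type*} [MeasurableSpace X] {μ : Measure X}

lemma aemeasurable_comp_of_ae_continuous {E F : Type*} [TopologicalSpace E]
    [TopologicalSpace.MetrizableSpace E] [SecondCountableTopology E] [MeasurableSpace E]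
    [OpensMeasurableSpace E] [TopologicalSpace F] [TopologicalSpace.PseudoMetrizableSpace F]
    [MeasurableSpace F] [BorelSpace F] [Nonempty F] {f : X → E → F}
    (hf_meas : ∀ e, Measurable fun x => f x e) (hf_cont : ∀ᵐ x ∂μ, Continuous (f x)) {u : X → E}
    (hu : Measurable u) : AEMeasurable (fun x => f x (u x)) μ := by
  classical
  obtain ⟨y⟩ := ‹Nonempty F›
  obtain ⟨t, hft, ht, hμt⟩ := exists_measurable_superset_of_null (ae_iff.1 hf_cont)
  let f' : E → X → F := fun e x => if x ∈ t then y else f x e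
  have hf' : Measurable (Function.uncurry f') := by
    refine measurable_uncurry_of_continuous_of_measurable (fun x => ?_) fun e =>
      Measurable.ite ht measurable_const (hf_meas e)
    by_cases hx : x ∈ t
    · simpa only [f', hx, if_true] using continuous_const
    · simpa only [f', hx, if_false] using not_not.1 fun hcont => hx (hft hcont)
  refine ⟨fun x => f' (u x) x, hf'.comp (hu.prodMk measurable_id), ?_⟩
  filter_upwards [measure_eq_zero_iff_ae_notMem.1 hμt] with x hx
  simp only [f', hx, if_false]

lemma exists_subseq_ae_tendsto_zero {d : ℕ → X → ℝ} (hd : ∀ m, Integrable (d m) μ)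
    (hd_nonneg : ∀ m, 0 ≤ᵐ[μ] d m) (hlim : Tendsto (fun m => ∫ x, d m x ∂μ) atTop (𝓝 0)) :
    ∃ φ : ℕ → ℕ, StrictMono φ ∧ ∀ᵐ x ∂μ, Tendsto (fun m => d (φ m) x) atTop (𝓝 0) := by
  have hnorm (m : ℕ) : eLpNorm (d m - 0) 1 μ = ENNReal.ofReal (∫ x, d m x ∂μ) := by
    rw [sub_zero, eLpNorm_one_eq_lintegral_enorm, lintegral_enorm_of_ae_nonneg (hd_nonneg m),
      ofReal_integral_eq_lintegral_ofReal (hd m) (hd_nonneg m)]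
  refine TendstoInMeasure.exists_seq_tendsto_ae (g := 0) <|
    tendstoInMeasure_of_tendsto_eLpNorm one_ne_zero (fun m => (hd m).aestronglyMeasurable)
      aestronglyMeasurable_zero ?_
  simpa only [hnorm, ENNReal.ofReal_zero] using ENNReal.tendsto_ofReal hlim

lemma tendsto_lintegral_zero_of_le_add {f g : ℕ → X → ℝ≥0∞} {h : X → ℝ≥0∞}
    (hf : ∀ m, AEMeasurable (f m) μ) (hg : ∀ m, AEMeasurable (g m) μ) (hh : AEMeasurable h μ)
    (hle : ∀ m, ∀ᵐ x ∂μ, f m x ≤ g m x + h x) (hh_fin : ∫⁻ x, h x ∂μ ≠ ⊤)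
    (hg_lim : Tendsto (fun m => ∫⁻ x, g m x ∂μ) atTop (𝓝 0))
    (hf_lim : ∀ᵐ x ∂μ, Tendsto (fun m => f m x) atTop (𝓝 0)) :
    Tendsto (fun m => ∫⁻ x, f m x ∂μ) atTop (𝓝 0) := by
  have hmin : Tendsto (fun m => ∫⁻ x, min (f m x) (h x) ∂μ) atTop (𝓝 0) := by
    have hae : ∀ᵐ x ∂μ, Tendsto (fun m => min (f m x) (h x)) atTop (𝓝 0) := by
      filter_upwards [hf_lim] with x hx
      exact tendsto_of_tendsto_of_tendsto_of_le_of_le tendsto_const_nhds hx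
        (fun _ => zero_le) (fun _ => min_le_left _ _)
    simpa using tendsto_lintegral_of_dominated_convergence' h (fun m => (hf m).min hh)
      (fun m => .of_forall fun x => min_le_right _ _) hh_fin hae
  refine tendsto_of_tendsto_of_tendsto_of_le_of_le tendsto_const_nhds
    (by simpa using hg_lim.add hmin) (fun _ => zero_le) fun m => ?_
  calc ∫⁻ x, f m x ∂μ ≤ ∫⁻ x, (g m x + min (f m x) (h x)) ∂μ := by
        refine lintegral_mono_ae ?_
        filter_upwards [hle m] with x hx
        rcases le_total (f m x) (h x) with hfh | hfh
        · simp [min_eq_left hfh]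
        · simpa [min_eq_right hfh] using hx
    _ = ∫⁻ x, g m x ∂μ + ∫⁻ x, min (f m x) (h x) ∂μ := lintegral_add_left' (hg m) _

lemma tendsto_lintegral_ofReal_zero_of_le_mul_add {f d : ℕ → X → ℝ} {h : X → ℝ} {C : ℝ}
    (hC : 0 ≤ C) (hf : ∀ m, AEMeasurable (f m) μ) (hd : ∀ m, Integrable (d m) μ)
    (hd_nonneg : ∀ m, 0 ≤ᵐ[μ] d m) (hh : Integrable h μ)
    (hle : ∀ m, ∀ᵐ x ∂μ, f m x ≤ C * (d m x + h x))
    (hd_lim : Tendsto (fun m => ∫ x, d m x ∂μ) atTop (𝓝 0))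
    (hf_lim : ∀ᵐ x ∂μ, ∀ ns : ℕ → ℕ, Tendsto ns atTop atTop →
      Tendsto (fun m => d (ns m) x) atTop (𝓝 0) → Tendsto (fun m => f (ns m) x) atTop (𝓝 0)) :
    Tendsto (fun m => ∫⁻ x, ENNReal.ofReal (f m x) ∂μ) atTop (𝓝 0) := by
  refine tendsto_of_subseq_tendsto fun ns hns => ?_
  obtain ⟨φ, hφ, hdφ⟩ := exists_subseq_ae_tendsto_zero (fun m => hd (ns m))
    (fun m => hd_nonneg (ns m)) (hd_lim.comp hns)
  have hnsφ : Tendsto (ns ∘ φ) atTop atTop := hns.comp hφ.tendsto_atTop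
  refine ⟨φ, tendsto_lintegral_zero_of_le_add
    (g := fun m x => ENNReal.ofReal (C * d (ns (φ m)) x))
    (h := fun x => ENNReal.ofReal (C * h x)) (fun m => (hf _).ennreal_ofReal)
    (fun m => ((hd _).const_mul C).aemeasurable.ennreal_ofReal)
    (hh.const_mul C).aemeasurable.ennreal_ofReal (fun m => ?_)
    (hh.const_mul C).lintegral_lt_top.ne ?_ ?_⟩
  · filter_upwards [hle (ns (φ m))] with x hx
    exact (ENNReal.ofReal_le_ofReal (hx.trans_eq (mul_add _ _ _))).trans ENNReal.ofReal_add_le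
  · have hint (m : ℕ) : ∫⁻ x, ENNReal.ofReal (C * d m x) ∂μ =
        ENNReal.ofReal (C * ∫ x, d m x ∂μ) := by
      rw [← integral_const_mul, ofReal_integral_eq_lintegral_ofReal ((hd m).const_mul C)
        ((hd_nonneg m).mono fun x hx => mul_nonneg hC hx)]
    simpa only [hint, Function.comp_def, mul_zero, ENNReal.ofReal_zero] using
      ENNReal.tendsto_ofReal ((hd_lim.comp hnsφ).const_mul C)
  · filter_upwards [hf_lim, hdφ] with x hx hdx
    simpa only [ENNReal.ofReal_zero, Function.comp_def] using
      ENNReal.tendsto_ofReal (hx (ns ∘ φ) hnsφ hdx)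

variable {ι : Type*} [Fintype ι] {p : ι → X → ℝ} {u : X → ι → ℝ}

lemma measurable_modular (hp : ∀ i, Measurable (p i)) (hu : Measurable u) :
    Measurable fun x => modular (p · x) (u x) :=
  Finset.measurable_sum _ fun i _ =>
    (measurable_norm.comp ((measurable_pi_apply i).comp hu)).pow (hp i)

lemma integrable_modular (hp : ∀ i, Measurable (p i)) (hu : Measurable u)
    (hfin : ∫⁻ x, ENNReal.ofReal (modular (p · x) (u x)) ∂μ < ⊤) :
    Integrable (fun x => modular (p · x) (u x)) μ :=
  (lintegral_ofReal_ne_top_iff_integrable (measurable_modular hp hu).aestronglyMeasurable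
    (.of_forall fun _ => modular_nonneg _ _)).1 hfin.ne

lemma integrable_modular_of_forall_lintegral_lt_top {c : ι → X → ℝ} (hp : ∀ i, Measurable (p i))
    (hc : ∀ i, Measurable (c i)) (hc_nonneg : ∀ᵐ x ∂μ, ∀ i, 0 ≤ c i x)
    (hfin : ∀ i, ∫⁻ x, ENNReal.ofReal (c i x ^ p i x) ∂μ < ⊤) :
    Integrable (fun x => modular (p · x) (c · x)) μ := by
  refine integrable_finsetSum _ fun i _ => ?_
  have hint : Integrable (fun x => c i x ^ p i x) μ :=
    (lintegral_ofReal_ne_top_iff_integrable ((hc i).pow (hp i)).aestronglyMeasurable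
      (hc_nonneg.mono fun x hx => Real.rpow_nonneg (hx i) _)).1 (hfin i).ne
  refine hint.congr (hc_nonneg.mono fun x hx => ?_)
  simp only [abs_of_nonneg (hx i)]

end Measure

section Convergence

variable {X : Type*} [MeasurableSpace X] {μ : Measure X} {ι : Type*} [Fintype ι]
  {p : ι → X → ℝ} {a : X → ℝ → (ι → ℝ) → ι → ℝ}

lemma aemeasurable_monotonicityGap (ha_meas : ∀ s ξ, Measurable fun x => a x s ξ)
    (ha_cont : ∀ᵐ x ∂μ, Continuous fun sξ : ℝ × (ι → ℝ) => a x sξ.1 sξ.2) {w : X → ℝ}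
    (hw : Measurable w) {u v : X → ι → ℝ} (hu : Measurable u) (hv : Measurable v) :
    AEMeasurable (fun x => monotonicityGap (a x (w x)) (u x) (v x)) μ := by
  have hcomp {z : X → ι → ℝ} (hz : Measurable z) (i : ι) :
      AEMeasurable (fun x => a x (w x) (z x) i) μ :=
    aemeasurable_pi_iff.1 (aemeasurable_comp_of_ae_continuous
      (f := fun x (sξ : ℝ × (ι → ℝ)) => a x sξ.1 sξ.2) (fun sξ => ha_meas sξ.1 sξ.2) ha_cont
      (hw.prodMk hz)) i
  refine Finset.aemeasurable_fun_sum _ fun i _ => ((hcomp hu i).sub (hcomp hv i)).mul ?_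
  exact (((measurable_pi_apply i).comp hu).sub ((measurable_pi_apply i).comp hv)).aemeasurable

theorem stmt_3_general {R : ℝ} (hp : ∀ i, Measurable (p i))
    (hpR : ∀ᵐ x ∂μ, IsBoundedExponent R (p · x))
    (ha_meas : ∀ s ξ, Measurable fun x => a x s ξ)
    {ahat : ι → ℝ → ℝ} (hahat : ∀ i, MonotoneOn (ahat i) (Set.Ici 0))
    {c : ι → X → ℝ} (hc_meas : ∀ i, Measurable (c i))
    (hc_int : ∀ i, ∫⁻ x, ENNReal.ofReal (c i x ^ conjExp (p i x)) ∂μ < ⊤)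
    {α : ℝ} (hα : 0 < α) (ha : ∀ᵐ x ∂μ, IsLerayLionsAt (p · x) (c · x) ahat α (a x))
    {k : ℝ} {w : ℕ → X → ℝ} (hw_meas : ∀ m, Measurable (w m)) {wlim : X → ℝ}
    (hw_bd : ∀ m, ∀ᵐ x ∂μ, |w m x| ≤ k)
    (hw_ae : ∀ᵐ x ∂μ, Tendsto (fun m => w m x) atTop (𝓝 (wlim x)))
    {v : ℕ → X → ι → ℝ} (hv_meas : ∀ m, Measurable (v m))
    {vlim : X → ι → ℝ} (hvlim_meas : Measurable vlim)
    (hv_mod : ∀ m, ∫⁻ x, ENNReal.ofReal (modular (p · x) (v m x)) ∂μ < ⊤)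
    (hvlim_mod : ∫⁻ x, ENNReal.ofReal (modular (p · x) (vlim x)) ∂μ < ⊤)
    (hlim : Tendsto (fun m => ∫ x, monotonicityGap (a x (w m x)) (v m x) (vlim x) ∂μ)
      atTop (𝓝 0)) :
    Tendsto (fun m => ∫⁻ x, ENNReal.ofReal (modular (p · x) (v m x - vlim x)) ∂μ)
      atTop (𝓝 0) := by
  obtain ⟨C, hgap_le⟩ := IsLerayLionsAt.exists_monotonicityGap_le hahat k R
  obtain ⟨C', hC', hsub_le⟩ := IsLerayLionsAt.exists_modular_sub_le hahat hα k R
  have hw_bd := ae_all_iff.2 hw_bd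
  have hbase : Integrable
      (fun x => modular (p · x) (vlim x) + modular (conjExp ∘ (p · x)) (c · x)) μ :=
    (integrable_modular hp hvlim_meas hvlim_mod).add <|
      integrable_modular_of_forall_lintegral_lt_top (fun i => measurable_conjExp.comp (hp i))
        hc_meas (ha.mono fun _ hx => hx.c_nonneg) hc_int
  have hgap_nonneg (m : ℕ) : ∀ᵐ x ∂μ, 0 ≤ monotonicityGap (a x (w m x)) (v m x) (vlim x) :=
    ha.mono fun _ hx => hx.monotonicityGap_nonneg _ _ _
  have hgap_int (m : ℕ) :
      Integrable (fun x => monotonicityGap (a x (w m x)) (v m x) (vlim x)) μ := by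
    refine (((integrable_modular hp (hv_meas m) (hv_mod m)).add hbase).const_mul C).mono'
      (aemeasurable_monotonicityGap ha_meas (ha.mono fun _ hx => hx.continuous) (hw_meas m)
        (hv_meas m) hvlim_meas).aestronglyMeasurable ?_
    filter_upwards [hpR, ha, hw_bd, hgap_nonneg m] with x hpx hax hwx hgap
    exact (Real.norm_of_nonneg hgap).trans_le (hgap_le hpx hax (hwx m) _ _)
  have hsub_ae : ∀ᵐ x ∂μ, ∀ m, modular (p · x) (v m x - vlim x) ≤
      C' * (monotonicityGap (a x (w m x)) (v m x) (vlim x) +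
        (modular (p · x) (vlim x) + modular (conjExp ∘ (p · x)) (c · x))) := by
    filter_upwards [hpR, ha, hw_bd] with x hpx hax hwx m
    exact hsub_le hpx hax (hwx m) _ _
  refine tendsto_lintegral_ofReal_zero_of_le_mul_add hC'
    (fun m => (measurable_modular hp ((hv_meas m).sub hvlim_meas)).aemeasurable) hgap_int
    hgap_nonneg hbase (ae_all_iff.1 hsub_ae) hlim ?_
  filter_upwards [hpR, ha, hw_ae, hsub_ae] with x hpx hax hwx hsub ns hns hgap
  exact hax.tendsto_modular_sub_zero hpx.one_lt (hwx.comp hns) hgap fun m => hsub (ns m)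

lemma tendsto_lintegral_abs_rpow_of_tendsto_lintegral_modular {κ : Type*} {l : Filter κ}
    {u : κ → X → ι → ℝ}
    (h : Tendsto (fun m => ∫⁻ x, ENNReal.ofReal (modular (p · x) (u m x)) ∂μ) l (𝓝 0)) (i : ι) :
    Tendsto (fun m => ∫⁻ x, ENNReal.ofReal (|u m x i| ^ p i x) ∂μ) l (𝓝 0) :=
  tendsto_of_tendsto_of_tendsto_of_le_of_le tendsto_const_nhds h (fun _ => zero_le)
    fun m => lintegral_mono fun x =>
      ENNReal.ofReal_le_ofReal (abs_rpow_le_modular (p · x) (u m x) i)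

end Convergence

/-- second conclusion of Lemma 2.2 of the paper: modular (strong) convergence of the
(abstract) gradients.  Under the Leray–Lions structure conditions (growth, strict
monotonicity, coercivity) on `a`, if `w m → w` a.e. with `|w m| ≤ k`, the fields `v m`
are bounded in the anisotropic modular, and
`∫_Q (a(x, w m, v m) − a(x, w m, v))·(v m − v) → 0`, then along a subsequence
`v m → v` a.e. in `Q`. -/
theorem stmt_3 {N : ℕ} (Q : Set (Fin N → ℝ)) (hQmeas : MeasurableSet Q)
    (hQbd : Bornology.IsBounded Q)
    (p : Fin N → (Fin N → ℝ) → ℝ) (hp : ∀ i, Measurable (p i))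
    (pm pM : Fin N → ℝ) (hpm : ∀ i, 1 < pm i)
    (hpb : ∀ᵐ x ∂(volume.restrict Q), ∀ i, pm i ≤ p i x ∧ p i x ≤ pM i)
    (a : (Fin N → ℝ) → ℝ → (Fin N → ℝ) → (Fin N → ℝ))
    (ha_meas : ∀ (s : ℝ) (ξ : Fin N → ℝ), Measurable (fun x => a x s ξ))
    (ha_cont : ∀ᵐ x ∂(volume.restrict Q),
      Continuous (fun sξ : ℝ × (Fin N → ℝ) => a x sξ.1 sξ.2))
    (ahat : Fin N → ℝ → ℝ) (hahat_cont : ∀ i, Continuous (ahat i))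
    (hahat_mono : ∀ i, MonotoneOn (ahat i) (Set.Ici 0))
    (hahat_pos : ∀ i, ∀ t : ℝ, 0 ≤ t → 0 < ahat i t)
    (c : Fin N → (Fin N → ℝ) → ℝ) (hc_meas : ∀ i, Measurable (c i))
    (hc_nonneg : ∀ i, ∀ᵐ x ∂(volume.restrict Q), 0 ≤ c i x)
    (hc_int : ∀ i, ∫⁻ x in Q, ENNReal.ofReal (c i x ^ conjExp (p i x)) < ⊤)
    (hgrowth : ∀ᵐ x ∂(volume.restrict Q), ∀ (s : ℝ) (ξ : Fin N → ℝ) (i : Fin N),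
      |a x s ξ i| ≤ ahat i |s| *
        ((∑ j, |ξ j| ^ p j x) ^ (1 / conjExp (p i x)) + c i x))
    (hmono : ∀ᵐ x ∂(volume.restrict Q), ∀ (s : ℝ) (ξ ξ' : Fin N → ℝ), ξ ≠ ξ' →
      0 < ∑ i, (a x s ξ i - a x s ξ' i) * (ξ i - ξ' i))
    (α : ℝ) (hα : 0 < α)
    (hcoer : ∀ᵐ x ∂(volume.restrict Q), ∀ (s : ℝ) (ξ : Fin N → ℝ),
      α * ∑ i, |ξ i| ^ p i x ≤ ∑ i, a x s ξ i * ξ i)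
    (k : ℝ) (hk : 0 < k)
    (w : ℕ → (Fin N → ℝ) → ℝ) (hw_meas : ∀ m, Measurable (w m))
    (wlim : (Fin N → ℝ) → ℝ) (hwlim_meas : Measurable wlim)
    (hw_bd : ∀ m, ∀ᵐ x ∂(volume.restrict Q), |w m x| ≤ k)
    (hw_ae : ∀ᵐ x ∂(volume.restrict Q),
      Tendsto (fun m => w m x) atTop (nhds (wlim x)))
    (v : ℕ → (Fin N → ℝ) → Fin N → ℝ) (hv_meas : ∀ m, Measurable (v m))
    (vlim : (Fin N → ℝ) → Fin N → ℝ) (hvlim_meas : Measurable vlim)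
    (B : ℝ≥0∞) (hB : B < ⊤)
    (hv_mod : ∀ m, ∫⁻ x in Q, ENNReal.ofReal (∑ i, |v m x i| ^ p i x) ≤ B)
    (hvlim_mod : ∫⁻ x in Q, ENNReal.ofReal (∑ i, |vlim x i| ^ p i x) < ⊤)
    (hlim : Tendsto (fun m => ∫ x in Q,
        ∑ i, (a x (w m x) (v m x) i - a x (w m x) (vlim x) i) * (v m x i - vlim x i))
      atTop (nhds 0)) :
    ∃ φ : ℕ → ℕ, StrictMono φ ∧
      ∀ i : Fin N,
        Tendsto (fun m => ∫⁻ x in Q,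
            ENNReal.ofReal (|v (φ m) x i - vlim x i| ^ p i x))
          atTop (nhds 0) := by
  obtain ⟨R, hR⟩ := exists_isBoundedExponent hpm pM
  have ha : ∀ᵐ x ∂(volume.restrict Q), IsLerayLionsAt (p · x) (c · x) ahat α (a x) := by
    filter_upwards [ha_cont, ae_all_iff.2 hc_nonneg, hgrowth, hmono, hcoer]
      with x hcont hc hgrow hmon hco using ⟨hcont, hc, hgrow, hmon, hco⟩
  exact ⟨id, strictMono_id, tendsto_lintegral_abs_rpow_of_tendsto_lintegral_modular <|
    stmt_3_general hp (hpb.mono fun _ hx => hR hx) ha_meas hahat_mono hc_meas hc_int hα ha hw_meas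
      hw_bd hw_ae hv_meas hvlim_meas (fun m => (hv_mod m).trans_lt hB) hvlim_mod hlim⟩
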